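/- (A₂ theorem for sparse operators, Cruz-Uribe–Martell–Pérez.) There is an absolute constant C > 0 such that for every 0 < η < 1, every η-sparse family S of standard dyadic cubes in ℝ^d, every weight w on ℝ^d with [w]_{A_2} < ∞ (and w^{-1} locally integrable), every f ∈ L²(w) and g ∈ L²(w^{-1}), one has ∑_{Q∈S} ⟨|f|⟩_Q · ⟨|g|⟩_Q · |Q| ≤ (C/η) · [w]_{A_2} · ‖f‖_{L²(w)} · ‖g‖_{L²(w^{-1})}. Consequently the sparse operator A_S satisfies ‖A_S f‖_{L²(w)} ≤ (C/η)[w]_{A_2}‖f‖_{L²(w)}. -/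

import Mathlib

open MeasureTheory ENNReal

noncomputable section

/-- The standard dyadic cube of generation `j` indexed by `k ∈ ℤ^d`. -/
def dyadicCube (d : ℕ) (j : ℤ) (k : Fin d → ℤ) : Set (Fin d → ℝ) :=
  {x | ∀ i, (k i : ℝ) * (2:ℝ) ^ (-j) ≤ x i ∧ x i < ((k i : ℝ) + 1) * (2:ℝ) ^ (-j)}

/-- The standard dyadic cube with parameter pair `q = (j, k)`. -/
def dCube (d : ℕ) (q : ℤ × (Fin d → ℤ)) : Set (Fin d → ℝ) := dyadicCube d q.1 q.2

/-- A family `S` of standard dyadic cubes (given by parameters) is `η`-sparse if there are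
pairwise disjoint measurable sets `E_Q ⊆ Q`, `Q ∈ S`, with `|E_Q| ≥ η |Q|`. -/
def IsSparse (d : ℕ) (η : ℝ) (S : Set (ℤ × (Fin d → ℤ))) : Prop :=
  ∃ E : {q // q ∈ S} → Set (Fin d → ℝ),
    (∀ q, MeasurableSet (E q)) ∧ (∀ q, E q ⊆ dCube d q.1) ∧
    (∀ q r, q ≠ r → Disjoint (E q) (E r)) ∧
    (∀ q, ENNReal.ofReal η * volume (dCube d q.1) ≤ volume (E q))

/-- An axis-parallel cube in `ℝ^d`. -/
def IsCube {d : ℕ} (Q : Set (Fin d → ℝ)) : Prop :=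
  ∃ (a : Fin d → ℝ) (l : ℝ), 0 < l ∧ Q = {x | ∀ i, a i ≤ x i ∧ x i < a i + l}

/-- The average of `f` over the set `Q` (with respect to Lebesgue measure). -/
def avg {d : ℕ} (Q : Set (Fin d → ℝ)) (f : (Fin d → ℝ) → ℝ) : ℝ :=
  (volume Q).toReal⁻¹ * ∫ x in Q, f x

/-- A weight: locally integrable and a.e. positive. -/
def IsWeight {d : ℕ} (w : (Fin d → ℝ) → ℝ) : Prop :=
  MeasureTheory.LocallyIntegrable w volume ∧
    ∀ᵐ x ∂(volume : Measure (Fin d → ℝ)), 0 < w x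

/-- The `A₂` characteristic `[w]_{A₂} = sup_Q ⟨w⟩_Q ⟨w⁻¹⟩_Q` over all axis-parallel cubes. -/
def a2Const (d : ℕ) (w : (Fin d → ℝ) → ℝ) : ℝ≥0∞ :=
  ⨆ Q : {Q : Set (Fin d → ℝ) // IsCube Q},
    ENNReal.ofReal (avg Q.1 w * avg Q.1 (fun x => (w x)⁻¹))

/-- Weighted `L^p` norm `(∫ |f|^p w)^(1/p)`. -/
def wLpNorm {d : ℕ} (p : ℝ) (w f : (Fin d → ℝ) → ℝ) : ℝ≥0∞ :=
  (∫⁻ x, ENNReal.ofReal |f x| ^ p * ENNReal.ofReal (w x)) ^ (1/p)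

/-- The sparse operator `A_S f = ∑_{Q ∈ S} ⟨f⟩_Q 1_Q` (pointwise sum). -/
def sparseOp (d : ℕ) (S : Set (ℤ × (Fin d → ℤ))) (f : (Fin d → ℝ) → ℝ)
    (x : Fin d → ℝ) : ℝ :=
  ∑' q : {q // q ∈ S}, avg (dCube d q.1) f * (dCube d q.1).indicator (fun _ => (1:ℝ)) x

open scoped NNReal in
/-- The maximal function `max_{q ∈ T} a_q 1_{Q_q}` of a finite family of sets with heights. -/
def finsetMax {α ι : Type*} (T : Finset ι) (Q : ι → Set α) (a : ι → ℝ≥0) (x : α) : ℝ≥0 :=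
  T.sup fun q => (Q q).indicator (fun _ => a q) x

section Abstract

open scoped NNReal


lemma rpow_half_sq (b : ℝ≥0∞) : (b ^ (1 / 2 : ℝ)) ^ 2 = b := by
  rw [← ENNReal.rpow_natCast, ← ENNReal.rpow_mul]; norm_num

lemma rpow_half_le_of_le_mul_rpow_half {X c : ℝ≥0∞} (hX : X ≠ ⊤)
    (h : X ≤ c * X ^ (1 / 2 : ℝ)) : X ^ (1 / 2 : ℝ) ≤ c := by
  rcases eq_or_ne X 0 with rfl | h0
  · simp
  have hs : X ^ (1 / 2 : ℝ) * X ^ (1 / 2 : ℝ) = X := by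
    rw [← ENNReal.rpow_add _ _ h0 hX]; norm_num
  have h1 : X ^ (1 / 2 : ℝ) ≠ 0 := by simp [h0, hX]
  have h2 : X ^ (1 / 2 : ℝ) ≠ ⊤ := by simp [h0, hX]
  exact (ENNReal.mul_le_mul_iff_left h1 h2).1 (hs.trans_le h)

variable {α ι : Type*}

lemma le_finsetMax {T : Finset ι} {Q : ι → Set α} {a : ι → ℝ≥0} {q : ι} (hq : q ∈ T) {x : α}
    (hx : x ∈ Q q) : a q ≤ finsetMax T Q a x := by
  refine le_trans (le_of_eq ?_)
    (Finset.le_sup (f := fun q => (Q q).indicator (fun _ => a q) x) hq)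
  simp [hx]

lemma setOf_lt_finsetMax (T : Finset ι) (Q : ι → Set α) (a : ι → ℝ≥0) (t : ℝ≥0) :
    {x | t < finsetMax T Q a x} = ⋃ q ∈ T.filter (fun q => t < a q), Q q := by
  ext x
  simp only [finsetMax, Set.mem_ofPred_eq, Finset.lt_sup_iff, Finset.mem_filter, Set.mem_iUnion,
    exists_prop, and_assoc]
  refine exists_congr fun q => and_congr_right fun _ => ?_
  by_cases hx : x ∈ Q q <;> simp [hx]

variable [MeasurableSpace α] {μ : Measure α}

/-- Cauchy–Schwarz for a pair of mutually inverse weights. -/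
lemma lintegral_mul_le_weighted {W V F G : α → ℝ≥0∞} (hW : AEMeasurable W μ)
    (hV : AEMeasurable V μ) (hWV : ∀ᵐ x ∂μ, W x * V x = 1) (hF : AEMeasurable F μ)
    (hG : AEMeasurable G μ) :
    ∫⁻ x, F x * G x ∂μ ≤
      (∫⁻ x, F x ^ 2 * W x ∂μ) ^ (1 / 2 : ℝ) * (∫⁻ x, G x ^ 2 * V x ∂μ) ^ (1 / 2 : ℝ) := by
  have h := ENNReal.lintegral_mul_le_Lp_mul_Lq μ Real.HolderConjugate.two_two
    (hF.mul (hW.pow_const (1 / 2 : ℝ))) (hG.mul (hV.pow_const (1 / 2 : ℝ)))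
  have hsq : ∀ a b : ℝ≥0∞, (a * b ^ (1 / 2 : ℝ)) ^ (2 : ℝ) = a ^ 2 * b := fun a b => by
    rw [ENNReal.mul_rpow_of_nonneg _ _ zero_le_two, ← ENNReal.rpow_mul]; norm_num
  simp only [Pi.mul_apply, hsq] at h
  refine le_trans (lintegral_mono_ae ?_) h
  filter_upwards [hWV] with x hx
  rw [mul_mul_mul_comm, ← ENNReal.mul_rpow_of_nonneg _ _ (by norm_num), hx]
  simp

/-- A lower density bound on each set of a finite laminar family passes to the union. -/
lemma mul_measure_biUnion_le_of_laminar {ν : Measure α} (T : Finset ι) {Q : ι → Set α}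
    (hQ : ∀ q ∈ T, MeasurableSet (Q q))
    (hlam : ∀ q ∈ T, ∀ r ∈ T, Q q ⊆ Q r ∨ Q r ⊆ Q q ∨ Disjoint (Q q) (Q r)) {t : ℝ≥0∞}
    (h : ∀ q ∈ T, t * μ (Q q) ≤ ν (Q q)) :
    t * μ (⋃ q ∈ T, Q q) ≤ ν (⋃ q ∈ T, Q q) := by
  classical
  set U : Finset (Set α) := (T.image Q).filter (fun A => Maximal (· ∈ T.image Q) A) with hU
  have hmem : ∀ A ∈ U, ∃ q ∈ T, Q q = A := fun A hA => by
    simpa using (Finset.mem_filter.1 hA).1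
  have hunion : ⋃ q ∈ T, Q q = ⋃ A ∈ U, A := by
    apply Set.Subset.antisymm
    · refine Set.iUnion₂_subset fun q hq => ?_
      obtain ⟨B, hB, hBm⟩ := (T.image Q).exists_le_maximal (Finset.mem_image_of_mem Q hq)
      exact hB.trans (Set.subset_biUnion_of_mem (u := fun A : Set α => A)
        (Finset.mem_filter.2 ⟨hBm.1, hBm⟩ : B ∈ U))
    · refine Set.iUnion₂_subset fun A hA => ?_
      obtain ⟨q, hq, rfl⟩ := hmem A hA
      exact Set.subset_biUnion_of_mem (u := Q) hq
  have hdisj : (U : Set (Set α)).PairwiseDisjoint (fun A => A) := by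
    intro A hA B hB hAB
    have hAm := (Finset.mem_filter.1 hA).2
    have hBm := (Finset.mem_filter.1 hB).2
    obtain ⟨q, hq, rfl⟩ := hmem A hA
    obtain ⟨r, hr, rfl⟩ := hmem B hB
    rcases hlam q hq r hr with h' | h' | h'
    · exact absurd (hAm.eq_of_le hBm.1 h') hAB
    · exact absurd (hBm.eq_of_le hAm.1 h').symm hAB
    · exact h'
  have hmeas : ∀ A ∈ U, MeasurableSet A := fun A hA => by
    obtain ⟨q, hq, rfl⟩ := hmem A hA
    exact hQ q hq
  rw [hunion, measure_biUnion_finset hdisj hmeas, measure_biUnion_finset hdisj hmeas,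
    Finset.mul_sum]
  refine Finset.sum_le_sum fun A hA => ?_
  obtain ⟨q, hq, rfl⟩ := hmem A hA
  exact h q hq

lemma measurable_finsetMax (T : Finset ι) {Q : ι → Set α} (hQ : ∀ q, MeasurableSet (Q q))
    (a : ι → ℝ≥0) : Measurable (finsetMax T Q a) := by
  classical
  unfold finsetMax
  induction T using Finset.induction_on with
  | empty => simp
  | insert q T _ ih =>
    simp only [Finset.sup_insert]
    exact (measurable_const.indicator (hQ q)).sup ih

lemma lintegral_finsetMax_sq_lt_top (T : Finset ι) {Q : ι → Set α}
    (hQ : ∀ q, MeasurableSet (Q q)) (hfin : ∀ q, μ (Q q) ≠ ⊤) (a : ι → ℝ≥0) :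
    ∫⁻ x, (finsetMax T Q a x : ℝ≥0∞) ^ 2 ∂μ ≠ ⊤ := by
  have hle : ∀ x, (finsetMax T Q a x : ℝ≥0∞) ^ 2 ≤
      ∑ q ∈ T, (Q q).indicator (fun _ => (a q : ℝ≥0∞) ^ 2) x := fun x => by
    rcases T.eq_empty_or_nonempty with rfl | hT
    · simp [finsetMax]
    obtain ⟨q, hq, hqx⟩ := T.exists_mem_eq_sup hT fun q => (Q q).indicator (fun _ => a q) x
    rw [finsetMax, hqx]
    refine le_trans (le_of_eq ?_)
      (Finset.single_le_sum (f := fun q => (Q q).indicator (fun _ => (a q : ℝ≥0∞) ^ 2) x)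
        (fun _ _ => zero_le) hq)
    by_cases hx : x ∈ Q q <;> simp [hx]
  refine ne_top_of_le_ne_top ?_ (lintegral_mono hle)
  rw [lintegral_finsetSum _ fun q _ => measurable_const.indicator (hQ q)]
  refine ENNReal.sum_ne_top.2 fun q _ => ?_
  rw [lintegral_indicator_const (hQ q)]
  exact ENNReal.mul_ne_top (by simp) (hfin q)

/-- The `L²` bound for the maximal operator of a finite laminar family. -/
lemma lintegral_finsetMax_sq_le (T : Finset ι) {Q : ι → Set α}
    (hQ : ∀ q, MeasurableSet (Q q)) (hfin : ∀ q, μ (Q q) ≠ ⊤)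
    (hlam : ∀ q r, Q q ⊆ Q r ∨ Q r ⊆ Q q ∨ Disjoint (Q q) (Q r)) {a : ι → ℝ≥0}
    {F : α → ℝ≥0∞} (hF : AEMeasurable F μ)
    (ha : ∀ q, a q * μ (Q q) ≤ ∫⁻ x in Q q, F x ∂μ) :
    ∫⁻ x, (finsetMax T Q a x : ℝ≥0∞) ^ 2 ∂μ ≤ 4 * ∫⁻ x, F x ^ 2 ∂μ := by
  set m := finsetMax T Q a with hm
  have hmm : Measurable m := measurable_finsetMax T hQ a
  have hmr : Measurable fun x => (m x : ℝ) := hmm.coe_nnreal_real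
  set ν := μ.withDensity F with hν
  have hweak : ∀ t : ℝ, 0 < t →
      μ {x | t < (m x : ℝ)} * ENNReal.ofReal t ≤ ν {x | t < (m x : ℝ)} := fun t ht => by
    lift t to ℝ≥0 using ht.le
    have hset : {x | (t : ℝ) < m x} = ⋃ q ∈ T.filter (fun q => t < a q), Q q := by
      rw [← setOf_lt_finsetMax]; simp [hm]
    rw [hset, mul_comm, ENNReal.ofReal_coe_nnreal]
    refine mul_measure_biUnion_le_of_laminar _ (fun q _ => hQ q) (fun q _ r _ => hlam q r) ?_
    intro q hq
    rw [hν, withDensity_apply _ (hQ q)]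
    refine le_trans ?_ (ha q)
    have : t ≤ a q := (Finset.mem_filter.1 hq).2.le
    gcongr
  have h1 : ∫⁻ x, (m x : ℝ≥0∞) ^ 2 ∂μ ≤ 2 * ∫⁻ x, (m x : ℝ≥0∞) * F x ∂μ := by
    have e1 := lintegral_rpow_eq_lintegral_meas_lt_mul μ (f := fun x => (m x : ℝ))
      (Filter.Eventually.of_forall fun x => (m x).coe_nonneg) hmr.aemeasurable zero_lt_two
    have e2 := lintegral_eq_lintegral_meas_lt ν (f := fun x => (m x : ℝ))
      (Filter.Eventually.of_forall fun x => (m x).coe_nonneg) hmr.aemeasurable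
    simp only [ENNReal.ofReal_coe_nnreal] at e2
    have e3 : ∫⁻ x, (m x : ℝ≥0∞) ∂ν = ∫⁻ x, (m x : ℝ≥0∞) * F x ∂μ := by
      rw [hν, lintegral_withDensity_eq_lintegral_mul₀ hF hmm.coe_nnreal_ennreal.aemeasurable]
      simp [mul_comm]
    have e4 : ∀ x, ENNReal.ofReal ((m x : ℝ) ^ (2 : ℝ)) = (m x : ℝ≥0∞) ^ 2 := fun x => by
      rw [Real.rpow_two, ENNReal.ofReal_pow (m x).coe_nonneg, ENNReal.ofReal_coe_nnreal]
    simp only [e4] at e1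
    rw [e1, ← e3, e2, ENNReal.ofReal_ofNat]
    gcongr 2 * ?_
    refine setLIntegral_mono' measurableSet_Ioi fun t ht => ?_
    have := hweak t ht
    norm_num
    exact this
  have h2 : ∫⁻ x, F x * (m x : ℝ≥0∞) ∂μ ≤ (∫⁻ x, F x ^ 2 ∂μ) ^ (1 / 2 : ℝ) *
      (∫⁻ x, (m x : ℝ≥0∞) ^ 2 ∂μ) ^ (1 / 2 : ℝ) := by
    simpa using lintegral_mul_le_weighted (W := fun _ => 1) (V := fun _ => 1) aemeasurable_const
      aemeasurable_const (by simp) hF hmm.coe_nnreal_ennreal.aemeasurable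
  have h3 := rpow_half_le_of_le_mul_rpow_half
    (c := 2 * (∫⁻ x, F x ^ 2 ∂μ) ^ (1 / 2 : ℝ))
    (lintegral_finsetMax_sq_lt_top (μ := μ) T hQ hfin a) (by
      refine h1.trans ?_
      rw [mul_assoc]
      simp only [mul_comm (F _)] at h2
      gcongr)
  have h4 := pow_le_pow_left₀ zero_le h3 2
  rw [mul_pow, rpow_half_sq, rpow_half_sq] at h4
  norm_num at h4
  exact h4

end Abstract

section Weighted

open scoped NNReal

variable {α ι : Type*} [MeasurableSpace α]

/-- A laminar family of sets `Q`, with pairwise disjoint subsets `E` of comparable measure, and a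
pair of mutually inverse weights `W`, `V` satisfying the `A₂` condition on the family. -/
structure IsSparseA2 (μ : Measure α) (W V : α → ℝ≥0∞) (Q E : ι → Set α) (A N : ℝ≥0∞) :
    Prop where
  aemeasurable_left : AEMeasurable W μ
  aemeasurable_right : AEMeasurable V μ
  mul_eq_one : ∀ᵐ x ∂μ, W x * V x = 1
  measurableSet : ∀ q, MeasurableSet (Q q)
  measurableSet_part : ∀ q, MeasurableSet (E q)
  part_subset : ∀ q, E q ⊆ Q q
  pairwise_disjoint : Pairwise fun q r => Disjoint (E q) (E r)
  laminar : ∀ q r, Q q ⊆ Q r ∨ Q r ⊆ Q q ∨ Disjoint (Q q) (Q r)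
  measure_ne_zero : ∀ q, μ (Q q) ≠ 0
  left_ne_top : ∀ q, ∫⁻ x in Q q, W x ∂μ ≠ ⊤
  right_ne_top : ∀ q, ∫⁻ x in Q q, V x ∂μ ≠ ⊤
  a2 : ∀ q, (∫⁻ x in Q q, W x ∂μ) * (∫⁻ x in Q q, V x ∂μ) ≤ A * μ (Q q) ^ 2
  sparse : ∀ q, μ (Q q) ≤ N * μ (E q)

namespace IsSparseA2

variable {μ : Measure α} {W V : α → ℝ≥0∞} {Q E : ι → Set α} {A N : ℝ≥0∞}

lemma symm (h : IsSparseA2 μ W V Q E A N) : IsSparseA2 μ V W Q E A N where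
  aemeasurable_left := h.aemeasurable_right
  aemeasurable_right := h.aemeasurable_left
  mul_eq_one := h.mul_eq_one.mono fun x hx => by rw [mul_comm, hx]
  measurableSet := h.measurableSet
  measurableSet_part := h.measurableSet_part
  part_subset := h.part_subset
  pairwise_disjoint := h.pairwise_disjoint
  laminar := h.laminar
  measure_ne_zero := h.measure_ne_zero
  left_ne_top := h.right_ne_top
  right_ne_top := h.left_ne_top
  a2 := fun q => by rw [mul_comm]; exact h.a2 q
  sparse := h.sparse

/-- The maximal function is bounded from `L²(W)` to `L²(V)` when averages are taken
relative to `V`. -/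
lemma lintegral_finsetMax_sq_mul_le (h : IsSparseA2 μ W V Q E A N) (T : Finset ι)
    {a : ι → ℝ≥0} {F : α → ℝ≥0∞} (hF : AEMeasurable F μ)
    (ha : ∀ q, a q * ∫⁻ x in Q q, V x ∂μ ≤ ∫⁻ x in Q q, F x ∂μ) :
    ∫⁻ x, (finsetMax T Q a x : ℝ≥0∞) ^ 2 * V x ∂μ ≤ 4 * ∫⁻ x, F x ^ 2 * W x ∂μ := by
  have hV := h.aemeasurable_right
  have hFW : AEMeasurable (fun x => F x * W x) μ := hF.mul h.aemeasurable_left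
  have hac := withDensity_absolutelyContinuous μ V
  have hm := (measurable_finsetMax T h.measurableSet a).coe_nnreal_ennreal
  have key := lintegral_finsetMax_sq_le (μ := μ.withDensity V) T h.measurableSet
    (fun q => by rw [withDensity_apply _ (h.measurableSet q)]; exact h.right_ne_top q)
    h.laminar (a := a) (hFW.mono_ac hac) (fun q => by
      rw [withDensity_apply _ (h.measurableSet q), restrict_withDensity (h.measurableSet q),
        lintegral_withDensity_eq_lintegral_mul₀ hV.restrict hFW.restrict]
      refine (ha q).trans (lintegral_mono_ae ?_)
      filter_upwards [ae_restrict_of_ae h.mul_eq_one] with x hx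
      rw [Pi.mul_apply, mul_left_comm, mul_comm (V x), hx, mul_one])
  rw [lintegral_withDensity_eq_lintegral_mul₀ hV (hm.pow_const 2).aemeasurable,
    lintegral_withDensity_eq_lintegral_mul₀ hV (hFW.pow_const 2)] at key
  refine (le_of_eq ?_).trans (key.trans (le_of_eq ?_))
  · simp only [Pi.mul_apply, mul_comm]
  · congr 1
    refine lintegral_congr_ae ?_
    filter_upwards [h.mul_eq_one] with x hx
    calc V x * (F x * W x) ^ 2 = F x ^ 2 * W x * (W x * V x) := by ring
      _ = F x ^ 2 * W x := by rw [hx, mul_one]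

lemma lintegral_ne_top (h : IsSparseA2 μ W V Q E A N) {F : α → ℝ≥0∞} (hF : AEMeasurable F μ)
    (hfin : ∫⁻ x, F x ^ 2 * W x ∂μ ≠ ⊤) (q : ι) : ∫⁻ x in Q q, F x ∂μ ≠ ⊤ := by
  have hcs := lintegral_mul_le_weighted h.aemeasurable_left.restrict h.aemeasurable_right.restrict
    (ae_restrict_of_ae h.mul_eq_one) hF.restrict (μ := μ.restrict (Q q)) (G := fun _ => 1)
    aemeasurable_const
  simp only [mul_one, one_pow, one_mul] at hcs
  refine ne_top_of_le_ne_top (ENNReal.mul_ne_top ?_ ?_) hcs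
  · exact ENNReal.rpow_ne_top_of_nonneg (by norm_num)
      (ne_top_of_le_ne_top hfin (setLIntegral_le_lintegral _ _))
  · exact ENNReal.rpow_ne_top_of_nonneg (by norm_num) (h.right_ne_top q)

lemma lintegral_right_ne_zero (h : IsSparseA2 μ W V Q E A N) (q : ι) :
    ∫⁻ x in Q q, V x ∂μ ≠ 0 := by
  intro h0
  rw [lintegral_eq_zero_iff' h.aemeasurable_right.restrict] at h0
  have hF : ∀ᵐ x ∂μ.restrict (Q q), False := by
    filter_upwards [h0, ae_restrict_of_ae h.mul_eq_one] with x hx hx'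
    simp [hx] at hx'
  simp [h.measure_ne_zero q] at hF

/-- The averages of `F` over the sets `Q q` relative to the weight `V` are finite. -/
lemma exists_average (h : IsSparseA2 μ W V Q E A N) {F : α → ℝ≥0∞} (hF : AEMeasurable F μ)
    (hfin : ∫⁻ x, F x ^ 2 * W x ∂μ ≠ ⊤) :
    ∃ a : ι → ℝ≥0, ∀ q, a q * ∫⁻ x in Q q, V x ∂μ = ∫⁻ x in Q q, F x ∂μ := by
  refine ⟨fun q => ((∫⁻ x in Q q, F x ∂μ) / ∫⁻ x in Q q, V x ∂μ).toNNReal, fun q => ?_⟩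
  rw [ENNReal.coe_toNNReal
    (ENNReal.div_ne_top (h.lintegral_ne_top hF hfin q) (h.lintegral_right_ne_zero q)),
    ENNReal.div_mul_cancel (h.lintegral_right_ne_zero q) (h.right_ne_top q)]

/-- The bilinear sparse bound for a finite subfamily. -/
lemma sum_le (h : IsSparseA2 μ W V Q E A N) (T : Finset ι) {F G : α → ℝ≥0∞}
    (hF : AEMeasurable F μ) (hG : AEMeasurable G μ) (hFfin : ∫⁻ x, F x ^ 2 * W x ∂μ ≠ ⊤)
    (hGfin : ∫⁻ x, G x ^ 2 * V x ∂μ ≠ ⊤) :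
    ∑ q ∈ T, (∫⁻ x in Q q, F x ∂μ) * (∫⁻ x in Q q, G x ∂μ) / μ (Q q) ≤
      4 * N * A * (∫⁻ x, F x ^ 2 * W x ∂μ) ^ (1 / 2 : ℝ) *
        (∫⁻ x, G x ^ 2 * V x ∂μ) ^ (1 / 2 : ℝ) := by
  obtain ⟨a, ha⟩ := h.exists_average hF hFfin
  obtain ⟨b, hb⟩ := h.symm.exists_average hG hGfin
  have hMa := h.lintegral_finsetMax_sq_mul_le T hF fun q => (ha q).le
  have hMb := h.symm.lintegral_finsetMax_sq_mul_le T hG fun q => (hb q).le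
  set m := fun x => (finsetMax T Q a x : ℝ≥0∞)
  set n := fun x => (finsetMax T Q b x : ℝ≥0∞)
  have hm : Measurable m := (measurable_finsetMax T h.measurableSet a).coe_nnreal_ennreal
  have hn : Measurable n := (measurable_finsetMax T h.measurableSet b).coe_nnreal_ennreal
  have hterm : ∀ q ∈ T, (∫⁻ x in Q q, F x ∂μ) * (∫⁻ x in Q q, G x ∂μ) / μ (Q q) ≤
      N * A * ∫⁻ x in E q, m x * n x ∂μ := fun q hq => by
    have hE : (a q : ℝ≥0∞) * b q * μ (E q) ≤ ∫⁻ x in E q, m x * n x ∂μ := by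
      rw [← setLIntegral_const]
      refine setLIntegral_mono' (h.measurableSet_part q) fun x hx => ?_
      have hx' := h.part_subset q hx
      exact mul_le_mul' (ENNReal.coe_le_coe.2 (le_finsetMax hq hx'))
        (ENNReal.coe_le_coe.2 (le_finsetMax hq hx'))
    rw [← ha, ← hb]
    refine ENNReal.div_le_of_le_mul ?_
    calc (a q : ℝ≥0∞) * (∫⁻ x in Q q, V x ∂μ) * (b q * ∫⁻ x in Q q, W x ∂μ)
        = a q * b q * ((∫⁻ x in Q q, W x ∂μ) * ∫⁻ x in Q q, V x ∂μ) := by ring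
      _ ≤ a q * b q * (A * μ (Q q) ^ 2) := mul_le_mul_right (h.a2 q) _
      _ = a q * b q * A * μ (Q q) * μ (Q q) := by ring
      _ ≤ a q * b q * A * (N * μ (E q)) * μ (Q q) := by gcongr; exact h.sparse q
      _ = N * A * (a q * b q * μ (E q)) * μ (Q q) := by ring
      _ ≤ _ := by gcongr
  have hsqrt : (4 : ℝ≥0∞) ^ (1 / 2 : ℝ) = 2 := by
    rw [show (4 : ℝ≥0∞) = 2 ^ (2 : ℝ) by norm_num, ← ENNReal.rpow_mul]; norm_num
  calc _ ≤ ∑ q ∈ T, N * A * ∫⁻ x in E q, m x * n x ∂μ := Finset.sum_le_sum hterm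
    _ = N * A * ∫⁻ x in ⋃ q ∈ T, E q, m x * n x ∂μ := by
      rw [← Finset.mul_sum, lintegral_biUnion_finset (h.pairwise_disjoint.set_pairwise _)
        fun q _ => h.measurableSet_part q]
    _ ≤ N * A * ∫⁻ x, m x * n x ∂μ := by gcongr; exact Measure.restrict_le_self
    _ ≤ N * A * ((∫⁻ x, m x ^ 2 * V x ∂μ) ^ (1 / 2 : ℝ) *
          (∫⁻ x, n x ^ 2 * W x ∂μ) ^ (1 / 2 : ℝ)) := by
      gcongr
      exact lintegral_mul_le_weighted h.aemeasurable_right h.aemeasurable_left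
        h.symm.mul_eq_one hm.aemeasurable hn.aemeasurable
    _ ≤ N * A * ((4 * ∫⁻ x, F x ^ 2 * W x ∂μ) ^ (1 / 2 : ℝ) *
          (4 * ∫⁻ x, G x ^ 2 * V x ∂μ) ^ (1 / 2 : ℝ)) := by gcongr
    _ = _ := by
      rw [ENNReal.mul_rpow_of_nonneg _ _ (by norm_num),
        ENNReal.mul_rpow_of_nonneg _ _ (by norm_num), hsqrt]
      ring

/-- The weighted bound for the sparse operator of a finite subfamily. -/
lemma lintegral_sum_indicator_sq_le (h : IsSparseA2 μ W V Q E A N) (T : Finset ι)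
    {F : α → ℝ≥0∞} (hF : AEMeasurable F μ) (hFfin : ∫⁻ x, F x ^ 2 * W x ∂μ ≠ ⊤) :
    ∫⁻ x, (∑ q ∈ T, (Q q).indicator (fun _ => (∫⁻ y in Q q, F y ∂μ) / μ (Q q)) x) ^ 2 * W x ∂μ ≤
      (4 * N * A * (∫⁻ x, F x ^ 2 * W x ∂μ) ^ (1 / 2 : ℝ)) ^ 2 := by
  set c := fun q => (∫⁻ y in Q q, F y ∂μ) / μ (Q q)
  set H := fun x => ∑ q ∈ T, (Q q).indicator (fun _ => c q) x
  have hc : ∀ q, c q ≠ ⊤ := fun q =>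
    ENNReal.div_ne_top (h.lintegral_ne_top hF hFfin q) (h.measure_ne_zero q)
  have hH : Measurable H := Finset.measurable_fun_sum T fun q _ =>
    measurable_const.indicator (h.measurableSet q)
  have hHle : ∀ x, H x ≤ ∑ q ∈ T, c q := fun x =>
    Finset.sum_le_sum fun q _ => Set.indicator_le_self _ _ _
  have hpair : ∀ K : α → ℝ≥0∞, AEMeasurable K μ →
      ∫⁻ x, H x * K x ∂μ = ∑ q ∈ T, c q * ∫⁻ x in Q q, K x ∂μ := fun K hK => by
    have hpt : ∀ x, H x * K x = ∑ q ∈ T, (Q q).indicator (fun x => c q * K x) x := fun x => by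
      simp only [H, Finset.sum_mul]
      refine Finset.sum_congr rfl fun q _ => ?_
      by_cases hx : x ∈ Q q <;> simp [hx]
    simp only [hpt]
    rw [lintegral_finsetSum' _ fun q _ => (hK.const_mul _).indicator (h.measurableSet q)]
    refine Finset.sum_congr rfl fun q _ => ?_
    rw [lintegral_indicator (h.measurableSet q), lintegral_const_mul' _ _ (hc q)]
  set G := fun x => H x * W x
  have hG : AEMeasurable G μ := hH.aemeasurable.mul h.aemeasurable_left
  have hX : ∫⁻ x, H x ^ 2 * W x ∂μ = ∫⁻ x, H x * G x ∂μ := by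
    simp only [G, sq, mul_assoc]
  have hGX : ∫⁻ x, G x ^ 2 * V x ∂μ = ∫⁻ x, H x ^ 2 * W x ∂μ := by
    refine lintegral_congr_ae ?_
    filter_upwards [h.mul_eq_one] with x hx
    calc (H x * W x) ^ 2 * V x = H x ^ 2 * W x * (W x * V x) := by ring
      _ = _ := by rw [hx, mul_one]
  have hXfin : ∫⁻ x, H x ^ 2 * W x ∂μ ≠ ⊤ := by
    rw [hX, hpair G hG]
    refine ENNReal.sum_ne_top.2 fun q _ => ENNReal.mul_ne_top (hc q) ?_
    have hs : ∑ q ∈ T, c q ≠ ⊤ := ENNReal.sum_ne_top.2 fun q _ => hc q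
    refine ne_top_of_le_ne_top (ENNReal.mul_ne_top hs (h.left_ne_top q)) ?_
    rw [← lintegral_const_mul' _ _ hs]
    exact lintegral_mono fun x => mul_le_mul_left (hHle x) _
  have hle : ∫⁻ x, H x ^ 2 * W x ∂μ ≤ 4 * N * A * (∫⁻ x, F x ^ 2 * W x ∂μ) ^ (1 / 2 : ℝ) *
      (∫⁻ x, H x ^ 2 * W x ∂μ) ^ (1 / 2 : ℝ) := by
    have := h.sum_le T hF hG hFfin (hGX ▸ hXfin)
    rw [hGX] at this
    refine le_trans (le_of_eq ?_) this
    rw [hX, hpair G hG]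
    refine Finset.sum_congr rfl fun q _ => ?_
    simp only [c, ENNReal.div_eq_inv_mul, mul_assoc]
  have := pow_le_pow_left₀ zero_le (rpow_half_le_of_le_mul_rpow_half hXfin hle) 2
  rwa [rpow_half_sq] at this

/-- The weighted bound for the sparse operator. -/
lemma lintegral_tsum_indicator_sq_le [Countable ι] (h : IsSparseA2 μ W V Q E A N)
    {F : α → ℝ≥0∞} (hF : AEMeasurable F μ) (hFfin : ∫⁻ x, F x ^ 2 * W x ∂μ ≠ ⊤) :
    ∫⁻ x, (∑' q, (Q q).indicator (fun _ => (∫⁻ y in Q q, F y ∂μ) / μ (Q q)) x) ^ 2 * W x ∂μ ≤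
      (4 * N * A * (∫⁻ x, F x ^ 2 * W x ∂μ) ^ (1 / 2 : ℝ)) ^ 2 := by
  simp only [ENNReal.tsum_eq_iSup_sum, ENNReal.iSup_pow, ENNReal.iSup_mul]
  rw [lintegral_iSup_directed]
  · exact iSup_le fun T => h.lintegral_sum_indicator_sq_le T hF hFfin
  · intro T
    exact ((Finset.measurable_fun_sum T fun q _ =>
      measurable_const.indicator (h.measurableSet q)).pow_const 2).aemeasurable.mul
      h.aemeasurable_left
  · refine Monotone.directed_le fun T T' hT x => ?_
    dsimp only
    gcongr

end IsSparseA2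

end Weighted

section Dyadic

variable {d : ℕ}

lemma mem_dyadicCube_iff {j : ℤ} {k : Fin d → ℤ} {x : Fin d → ℝ} :
    x ∈ dyadicCube d j k ↔ ∀ i, ⌊x i * (2 : ℝ) ^ j⌋ = k i := by
  refine forall_congr' fun i => ?_
  have h2 : (0 : ℝ) < 2 ^ j := by positivity
  rw [Int.floor_eq_iff, zpow_neg, ← div_eq_mul_inv, ← div_eq_mul_inv, div_le_iff₀ h2,
    lt_div_iff₀ h2]

lemma dyadicCube_subset_or_disjoint {j j' : ℤ} (hj : j ≤ j') (k k' : Fin d → ℤ) :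
    dyadicCube d j' k' ⊆ dyadicCube d j k ∨ Disjoint (dyadicCube d j' k') (dyadicCube d j k) := by
  obtain ⟨n, rfl⟩ := Int.le.dest hj
  have hfl : ∀ {y : Fin d → ℝ}, y ∈ dyadicCube d (j + n) k' →
      ∀ i, ⌊y i * (2 : ℝ) ^ j⌋ = k' i / (2 ^ n : ℕ) := fun {y} hy i => by
    rw [← mem_dyadicCube_iff.1 hy i, ← Int.floor_div_natCast, zpow_add₀ two_ne_zero]
    congr 1
    push_cast
    rw [zpow_natCast]
    field_simp
  rw [or_iff_not_imp_right, Set.not_disjoint_iff]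
  rintro ⟨x, hx', hx⟩ y hy
  rw [mem_dyadicCube_iff] at hx ⊢
  intro i
  rw [hfl hy i, ← hfl hx' i, hx i]

lemma dCube_laminar (q r : ℤ × (Fin d → ℤ)) :
    dCube d q ⊆ dCube d r ∨ dCube d r ⊆ dCube d q ∨ Disjoint (dCube d q) (dCube d r) := by
  rcases le_total q.1 r.1 with h | h
  · rcases dyadicCube_subset_or_disjoint h q.2 r.2 with h' | h'
    · exact Or.inr (Or.inl h')
    · exact Or.inr (Or.inr h'.symm)
  · rcases dyadicCube_subset_or_disjoint h r.2 q.2 with h' | h'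
    · exact Or.inl h'
    · exact Or.inr (Or.inr h')

lemma dCube_eq_pi (q : ℤ × (Fin d → ℤ)) :
    dCube d q = Set.univ.pi fun i =>
      Set.Ico ((q.2 i : ℝ) * (2 : ℝ) ^ (-q.1)) (((q.2 i : ℝ) + 1) * (2 : ℝ) ^ (-q.1)) := by
  ext x; simp [dCube, dyadicCube]

lemma measurableSet_dCube (q : ℤ × (Fin d → ℤ)) : MeasurableSet (dCube d q) := by
  rw [dCube_eq_pi]
  exact MeasurableSet.univ_pi fun i => measurableSet_Ico

lemma isCube_dCube (q : ℤ × (Fin d → ℤ)) : IsCube (dCube d q) :=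
  ⟨fun i => (q.2 i : ℝ) * (2 : ℝ) ^ (-q.1), (2 : ℝ) ^ (-q.1), by positivity, by
    ext x; simp [dCube, dyadicCube, add_mul]⟩

lemma volume_dCube (q : ℤ × (Fin d → ℤ)) :
    volume (dCube d q) = ENNReal.ofReal ((2 : ℝ) ^ (-q.1)) ^ d := by
  rw [dCube_eq_pi, Real.volume_pi_Ico]
  simp [add_mul]

lemma volume_dCube_ne_zero (q : ℤ × (Fin d → ℤ)) : volume (dCube d q) ≠ 0 := by
  rw [volume_dCube]
  exact pow_ne_zero _ (ENNReal.ofReal_pos.2 (by positivity)).ne'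

lemma volume_dCube_ne_top (q : ℤ × (Fin d → ℤ)) : volume (dCube d q) ≠ ⊤ := by
  rw [volume_dCube]
  exact ENNReal.pow_ne_top ENNReal.ofReal_ne_top

lemma integrableOn_dCube {f : (Fin d → ℝ) → ℝ} (hf : LocallyIntegrable f volume)
    (q : ℤ × (Fin d → ℤ)) : IntegrableOn f (dCube d q) := by
  refine (hf.integrableOn_isCompact
    (isCompact_univ_pi fun i => isCompact_Icc)).mono_set ((dCube_eq_pi q).subset.trans
      (Set.pi_mono fun i _ => Set.Ico_subset_Icc_self))

lemma ofReal_inv_toReal {a : ℝ≥0∞} (h0 : a ≠ 0) :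
    ENNReal.ofReal a.toReal⁻¹ = a⁻¹ := by
  rw [← ENNReal.toReal_inv, ENNReal.ofReal_toReal (ENNReal.inv_ne_top.2 h0)]

lemma enorm_avg_le (q : ℤ × (Fin d → ℤ)) (f : (Fin d → ℝ) → ℝ) :
    ‖avg (dCube d q) f‖ₑ ≤ (∫⁻ x in dCube d q, ‖f x‖ₑ) / volume (dCube d q) := by
  rw [avg, enorm_mul, ENNReal.div_eq_inv_mul,
    Real.enorm_eq_ofReal (inv_nonneg.2 ENNReal.toReal_nonneg),
    ofReal_inv_toReal (volume_dCube_ne_zero q)]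
  gcongr
  exact enorm_integral_le_lintegral_enorm _

lemma ofReal_avg {w : (Fin d → ℝ) → ℝ} (hw : LocallyIntegrable w volume)
    (hpos : ∀ᵐ x, 0 ≤ w x) (q : ℤ × (Fin d → ℤ)) :
    ENNReal.ofReal (avg (dCube d q) w) =
      (volume (dCube d q))⁻¹ * ∫⁻ x in dCube d q, ENNReal.ofReal (w x) := by
  rw [avg, ENNReal.ofReal_mul (inv_nonneg.2 ENNReal.toReal_nonneg),
    ofReal_inv_toReal (volume_dCube_ne_zero q),
    ofReal_integral_eq_lintegral_ofReal (integrableOn_dCube hw q) (ae_restrict_of_ae hpos)]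

lemma lintegral_mul_lintegral_inv_le_a2Const {w : (Fin d → ℝ) → ℝ} (hw : IsWeight w)
    (hw' : LocallyIntegrable (fun x => (w x)⁻¹) volume) (q : ℤ × (Fin d → ℤ)) :
    (∫⁻ x in dCube d q, ENNReal.ofReal (w x)) * (∫⁻ x in dCube d q, ENNReal.ofReal (w x)⁻¹) ≤
      a2Const d w * volume (dCube d q) ^ 2 := by
  have hpos : ∀ᵐ x, 0 ≤ w x := hw.2.mono fun x hx => hx.le
  have hle : ENNReal.ofReal (avg (dCube d q) w * avg (dCube d q) fun x => (w x)⁻¹) ≤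
      a2Const d w :=
    le_iSup (fun Q : {Q : Set (Fin d → ℝ) // IsCube Q} =>
      ENNReal.ofReal (avg Q.1 w * avg Q.1 fun x => (w x)⁻¹)) ⟨_, isCube_dCube q⟩
  have hnn : 0 ≤ avg (dCube d q) w :=
    mul_nonneg (inv_nonneg.2 ENNReal.toReal_nonneg)
      (integral_nonneg_of_ae (ae_restrict_of_ae hpos))
  rw [ENNReal.ofReal_mul hnn, ofReal_avg hw.1 hpos,
    ofReal_avg hw' (hpos.mono fun x hx => inv_nonneg.2 hx)] at hle
  have hv := ENNReal.mul_inv_cancel (volume_dCube_ne_zero q) (volume_dCube_ne_top q)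
  set v := volume (dCube d q)
  set I := ∫⁻ x in dCube d q, ENNReal.ofReal (w x)
  set J := ∫⁻ x in dCube d q, ENNReal.ofReal (w x)⁻¹
  calc I * J = (v * v⁻¹) * (v * v⁻¹) * (I * J) := by rw [hv]; simp
    _ = (v⁻¹ * I * (v⁻¹ * J)) * v ^ 2 := by ring
    _ ≤ a2Const d w * v ^ 2 := by gcongr

lemma isSparseA2_dCube {η : ℝ} (hη : 0 < η) {S : Set (ℤ × (Fin d → ℤ))}
    {E : {q // q ∈ S} → Set (Fin d → ℝ)} (hE : ∀ q, MeasurableSet (E q))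
    (hsub : ∀ q, E q ⊆ dCube d q.1) (hdisj : ∀ q r, q ≠ r → Disjoint (E q) (E r))
    (hvol : ∀ q, ENNReal.ofReal η * volume (dCube d q.1) ≤ volume (E q))
    {w : (Fin d → ℝ) → ℝ} (hw : IsWeight w)
    (hw' : LocallyIntegrable (fun x => (w x)⁻¹) volume) :
    IsSparseA2 volume (fun x => ENNReal.ofReal (w x)) (fun x => ENNReal.ofReal (w x)⁻¹)
      (fun q : {q // q ∈ S} => dCube d q.1) E (a2Const d w) (ENNReal.ofReal η)⁻¹ where
  aemeasurable_left := hw.1.aestronglyMeasurable.aemeasurable.ennreal_ofReal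
  aemeasurable_right := hw'.aestronglyMeasurable.aemeasurable.ennreal_ofReal
  mul_eq_one := hw.2.mono fun x hx => by
    rw [← ENNReal.ofReal_mul hx.le, mul_inv_cancel₀ hx.ne', ENNReal.ofReal_one]
  measurableSet := fun q => measurableSet_dCube q.1
  measurableSet_part := hE
  part_subset := hsub
  pairwise_disjoint := fun q r => hdisj q r
  laminar := fun q r => dCube_laminar q.1 r.1
  measure_ne_zero := fun q => volume_dCube_ne_zero q.1
  left_ne_top := fun q => (integrableOn_dCube hw.1 q.1).lintegral_lt_top.ne
  right_ne_top := fun q => (integrableOn_dCube hw' q.1).lintegral_lt_top.ne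
  a2 := fun q => lintegral_mul_lintegral_inv_le_a2Const hw hw' q.1
  sparse := fun q => by
    rw [← ENNReal.div_eq_inv_mul,
      ENNReal.le_div_iff_mul_le (Or.inl (ENNReal.ofReal_pos.2 hη).ne')
        (Or.inl ENNReal.ofReal_ne_top),
      mul_comm]
    exact hvol q

lemma wLpNorm_two (w f : (Fin d → ℝ) → ℝ) :
    wLpNorm 2 w f = (∫⁻ x, ‖f x‖ₑ ^ 2 * ENNReal.ofReal (w x)) ^ (1 / 2 : ℝ) := by
  simp only [wLpNorm, Real.enorm_eq_ofReal_abs, ENNReal.rpow_two]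

lemma lintegral_ne_top_of_wLpNorm_two {w f : (Fin d → ℝ) → ℝ} (h : wLpNorm 2 w f < ⊤) :
    ∫⁻ x, ‖f x‖ₑ ^ 2 * ENNReal.ofReal (w x) ≠ ⊤ := by
  rw [wLpNorm_two] at h
  exact ((ENNReal.rpow_lt_top_iff_of_pos (by norm_num)).1 h).ne

lemma ofReal_avg_mul_avg_mul_le (q : ℤ × (Fin d → ℤ)) (f g : (Fin d → ℝ) → ℝ) :
    ENNReal.ofReal (avg (dCube d q) (fun x => |f x|) * avg (dCube d q) (fun x => |g x|) *
        (volume (dCube d q)).toReal) ≤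
      (∫⁻ x in dCube d q, ‖f x‖ₑ) * (∫⁻ x in dCube d q, ‖g x‖ₑ) / volume (dCube d q) := by
  have h0 := volume_dCube_ne_zero q
  have ht := volume_dCube_ne_top q
  have hf := enorm_avg_le q fun x => |f x|
  have hg := enorm_avg_le q fun x => |g x|
  simp only [Real.enorm_abs] at hf hg
  refine (Real.ofReal_le_enorm _).trans ?_
  rw [enorm_mul, enorm_mul, Real.enorm_eq_ofReal ENNReal.toReal_nonneg, ENNReal.ofReal_toReal ht]
  refine (mul_le_mul_left (mul_le_mul' hf hg) _).trans (le_of_eq ?_)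
  rw [mul_assoc, ENNReal.div_mul_cancel h0 ht, ENNReal.mul_div_right_comm]

lemma enorm_sparseOp_le (S : Set (ℤ × (Fin d → ℤ))) (f : (Fin d → ℝ) → ℝ) (x : Fin d → ℝ) :
    ‖sparseOp d S f x‖ₑ ≤ ∑' q : {q // q ∈ S}, (dCube d q.1).indicator
      (fun _ => (∫⁻ y in dCube d q.1, ‖f y‖ₑ) / volume (dCube d q.1)) x := by
  refine enorm_tsum_le_tsum_enorm.trans (ENNReal.tsum_le_tsum fun q => ?_)
  by_cases hx : x ∈ dCube d q.1
  · simpa [hx] using enorm_avg_le q.1 f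
  · simp [hx]

end Dyadic

/-- **A₂ theorem for sparse operators, Cruz-Uribe–Martell–Pérez.** There is an
absolute constant `C` such that for every `η`-sparse family `S`, every `w ∈ A₂`,
`f ∈ L²(w)` and `g ∈ L²(w⁻¹)`:
`∑_{Q∈S} ⟨|f|⟩_Q ⟨|g|⟩_Q |Q| ≤ (C/η)[w]_{A₂}‖f‖_{L²(w)}‖g‖_{L²(w⁻¹)}`, and consequently
`‖A_S f‖_{L²(w)} ≤ (C/η)[w]_{A₂}‖f‖_{L²(w)}`. -/
theorem sparse_A2_theorem :
    ∃ C : ℝ, 0 < C ∧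
      ∀ d : ℕ, 1 ≤ d →
        ∀ η : ℝ, 0 < η → η < 1 →
          ∀ S : Set (ℤ × (Fin d → ℤ)), IsSparse d η S →
            ∀ w f : (Fin d → ℝ) → ℝ,
              IsWeight w → MeasureTheory.LocallyIntegrable (fun x => (w x)⁻¹) volume →
              a2Const d w < ⊤ →
              Measurable f → wLpNorm 2 w f < ⊤ →
              (∀ g : (Fin d → ℝ) → ℝ,
                Measurable g → wLpNorm 2 (fun x => (w x)⁻¹) g < ⊤ →
                ∑' q : {q // q ∈ S}, ENNReal.ofReal
                    (avg (dCube d q.1) (fun x => |f x|) *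
                      avg (dCube d q.1) (fun x => |g x|) * (volume (dCube d q.1)).toReal)
                  ≤ ENNReal.ofReal (C / η) * a2Const d w *
                      wLpNorm 2 w f * wLpNorm 2 (fun x => (w x)⁻¹) g) ∧
              wLpNorm 2 w (sparseOp d S f)
                ≤ ENNReal.ofReal (C / η) * a2Const d w * wLpNorm 2 w f := by
  refine ⟨4, by norm_num, ?_⟩
  rintro d - η hη - S ⟨E, hE, hsub, hdisj, hvol⟩ w f hw hw' - hf hfin
  have h := isSparseA2_dCube hη hE hsub hdisj hvol hw hw'
  have hC : ENNReal.ofReal (4 / η) = 4 * (ENNReal.ofReal η)⁻¹ := by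
    rw [ENNReal.ofReal_div_of_pos hη, ENNReal.div_eq_inv_mul, mul_comm, ENNReal.ofReal_ofNat]
  have hfin' := lintegral_ne_top_of_wLpNorm_two hfin
  rw [hC]
  refine ⟨fun g hg hgfin => ?_, ?_⟩
  · have hgfin' := lintegral_ne_top_of_wLpNorm_two hgfin
    rw [wLpNorm_two, wLpNorm_two]
    rw [ENNReal.tsum_eq_iSup_sum]
    refine iSup_le fun T => le_trans (Finset.sum_le_sum fun q _ => ?_)
      (h.sum_le T hf.enorm.aemeasurable hg.enorm.aemeasurable hfin' hgfin')
    exact ofReal_avg_mul_avg_mul_le q.1 f g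
  · rw [wLpNorm_two, wLpNorm_two]
    have hle : ∫⁻ x, ‖sparseOp d S f x‖ₑ ^ 2 * ENNReal.ofReal (w x) ≤
        (4 * (ENNReal.ofReal η)⁻¹ * a2Const d w *
          (∫⁻ x, ‖f x‖ₑ ^ 2 * ENNReal.ofReal (w x)) ^ (1 / 2 : ℝ)) ^ 2 := by
      refine le_trans (lintegral_mono fun x => ?_)
        (h.lintegral_tsum_indicator_sq_le hf.enorm.aemeasurable hfin')
      gcongr
      exact enorm_sparseOp_le S f x
    refine (ENNReal.rpow_le_rpow hle (by norm_num : (0 : ℝ) ≤ 1 / 2)).trans (le_of_eq ?_)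
    rw [← ENNReal.rpow_natCast, ← ENNReal.rpow_mul]
    norm_num

end
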